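/- Let X be a real Banach space, let E be a finite-dimensional linear subspace of X, and let F be a closed linear subspace of X that is simultaneously approximatively compact. Then E + F is simultaneously approximatively compact. -/

import Mathlib

/-!
Let `y` be a minimizing sequence for `A` in `E + F`. It is bounded because `A` is, so its image in
`X ⧸ F` is a bounded sequence in the finite-dimensional image of `E`; along a subsequence it
converges to the class of some `e ∈ E`. By definition of the quotient norm there are `g n ∈ F` such
that `y n - (e + g n) → 0` along this subsequence.

As `simSup A` is 1-Lipschitz, `simSup A (e + g n)` tends to `simDist A (E + F)`, which is at most
`simDist (A - e) F` since `e + F ⊆ E + F`. Hence `g` is minimizing for `A - e` in `F`, so it has a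
subsequence converging in `F`, and `y` converges along the corresponding subsequence. Working in
the quotient means that `y` never has to be split into a bounded part in `E` and one in `F`.
-/

open Filter Topology Pointwise

variable {X : Type*} [NormedAddCommGroup X] [NormedSpace ℝ X]

/-- `simSup A y = sup_{a ∈ A} ‖a - y‖`. -/
noncomputable def simSup (A : Set X) (y : X) : ℝ := ⨆ a : A, ‖(a : X) - y‖

/-- `simDist A C = inf_{y ∈ C} sup_{a ∈ A} ‖a - y‖`. -/
noncomputable def simDist (A C : Set X) : ℝ := ⨅ y : C, simSup A (y : X)

/-- The set of best simultaneous approximations `P_C(A)`. -/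
def simBest (A C : Set X) : Set X := {y | y ∈ C ∧ simSup A y = simDist A C}

/-- The set `P_C(A, δ)`. -/
def simBestApprox (A C : Set X) (δ : ℝ) : Set X :=
  {y | y ∈ C ∧ simSup A y < simDist A C + δ}

/-- `C` is simultaneously proximinal. -/
def SimProximinal (C : Set X) : Prop :=
  ∀ A : Set X, A.Nonempty → Bornology.IsBounded A → (simBest A C).Nonempty

/-- `y` is a minimizing sequence in `C` for `A`. -/
def IsMinimizing (A C : Set X) (y : ℕ → X) : Prop :=
  (∀ n, y n ∈ C) ∧ Tendsto (fun n => simSup A (y n)) atTop (𝓝 (simDist A C))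

/-- Weak convergence of a sequence. -/
def WeakTendsto (y : ℕ → X) (c : X) : Prop :=
  ∀ f : X →L[ℝ] ℝ, Tendsto (fun n => f (y n)) atTop (𝓝 (f c))

/-- `C` is simultaneously approximatively compact. -/
def SimApproxCompact (C : Set X) : Prop :=
  ∀ A : Set X, A.Nonempty → Bornology.IsBounded A → ∀ y : ℕ → X, IsMinimizing A C y →
    ∃ c ∈ C, ∃ φ : ℕ → ℕ, StrictMono φ ∧ Tendsto (y ∘ φ) atTop (𝓝 c)

/-- `C` is simultaneously approximatively weakly compact. -/
def SimApproxWeakCompact (C : Set X) : Prop :=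
  ∀ A : Set X, A.Nonempty → Bornology.IsBounded A → ∀ y : ℕ → X, IsMinimizing A C y →
    ∃ c ∈ C, ∃ φ : ℕ → ℕ, StrictMono φ ∧ WeakTendsto (y ∘ φ) c

/-- `C` is simultaneously strongly proximinal. -/
def SimStronglyProximinal (C : Set X) : Prop :=
  SimProximinal C ∧ ∀ A : Set X, A.Nonempty → Bornology.IsBounded A → ∀ ε > (0 : ℝ),
    ∃ δ > (0 : ℝ), simBestApprox A C δ ⊆ simBest A C + Metric.closedBall (0 : X) ε

/-- `C` is simultaneously weakly strongly proximinal. -/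
def SimWeakStronglyProximinal (C : Set X) : Prop :=
  SimProximinal C ∧ ∀ A : Set X, A.Nonempty → Bornology.IsBounded A →
    ∀ V : Set X, V ∈ 𝓝 (0 : WeakSpace ℝ X) → ∃ δ > (0 : ℝ),
      simBestApprox A C δ ⊆ simBest A C + V
theorem norm_sub_le_simSup {A : Set X} (hA : Bornology.IsBounded A) {a : X} (ha : a ∈ A) (y : X) :
    ‖a - y‖ ≤ simSup A y := by
  obtain ⟨R, hR⟩ := hA.exists_norm_le
  refine le_ciSup (f := fun a : A => ‖(a : X) - y‖) ⟨R + ‖y‖, ?_⟩ ⟨a, ha⟩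
  rintro _ ⟨b, rfl⟩
  exact (norm_sub_le _ _).trans (by linarith [hR b b.2])

theorem simSup_le_add {A : Set X} (hne : A.Nonempty) (hA : Bornology.IsBounded A) (y z : X) :
    simSup A y ≤ simSup A z + ‖y - z‖ := by
  have : Nonempty A := hne.to_subtype
  refine ciSup_le fun a => ?_
  have h1 := norm_sub_le_simSup hA a.2 z
  have h2 : ‖(a : X) - y‖ ≤ ‖(a : X) - z‖ + ‖z - y‖ := norm_sub_le_norm_sub_add_norm_sub _ _ _
  rw [norm_sub_rev z y] at h2
  linarith

theorem simSup_image_sub (A : Set X) (e g : X) :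
    simSup ((fun a => a - e) '' A) g = simSup A (e + g) := by
  unfold simSup
  rw [← (Set.imageFactorization_surjective (f := fun a => a - e) (s := A)).iSup_comp]
  simp only [Set.imageFactorization, sub_sub]

theorem simDist_le_simSup {C : Set X} (A : Set X) {y : X} (hy : y ∈ C) :
    simDist A C ≤ simSup A y := by
  refine ciInf_le (f := fun y : C => simSup A (y : X)) ⟨0, ?_⟩ ⟨y, hy⟩
  rintro _ ⟨z, rfl⟩
  exact Real.iSup_nonneg fun _ => norm_nonneg _

/-- A bounded sequence in `E + F` is, along a subsequence, asymptotic to a sequence in a single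
translate `e + F` with `e ∈ E`: its classes modulo `F` lie in the finite-dimensional image of `E`,
where bounded sequences have convergent subsequences. -/
theorem exists_subseq_asymptotic_translate (E F : Subspace ℝ X) [FiniteDimensional ℝ E]
    (hF : IsClosed (F : Set X)) {y : ℕ → X} (hy : ∀ n, y n ∈ (E : Set X) + (F : Set X))
    {R : ℝ} (hR : ∀ n, ‖y n‖ ≤ R) :
    ∃ e ∈ E, ∃ g : ℕ → X, (∀ n, g n ∈ F) ∧ ∃ φ : ℕ → ℕ, StrictMono φ ∧
      Tendsto (fun n => y (φ n) - (e + g n)) atTop (𝓝 0) := by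
  have := hF
  have hmem : ∀ n, F.mkQ (y n) ∈ E.map F.mkQ := by
    intro n
    obtain ⟨u, hu, v, hv, huv⟩ := Set.mem_add.1 (hy n)
    refine ⟨u, hu, ?_⟩
    rw [← huv, map_add, (by simpa using hv : F.mkQ v = 0), add_zero]
  let z : ℕ → E.map F.mkQ := fun n => ⟨F.mkQ (y n), hmem n⟩
  have hz : ∀ n, z n ∈ Metric.closedBall (0 : E.map F.mkQ) R := fun n => by
    rw [mem_closedBall_zero_iff]
    exact (Submodule.Quotient.norm_mk_le F (y n)).trans (hR n)
  obtain ⟨⟨_, e, he, rfl⟩, -, φ, hφ, hlim⟩ :=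
    tendsto_subseq_of_bounded Metric.isBounded_closedBall hz
  have hlim' : Tendsto (fun n => ‖F.mkQ (y (φ n) - e)‖) atTop (𝓝 0) := by
    have h := tendsto_iff_norm_sub_tendsto_zero.1 hlim
    refine h.congr fun n => ?_
    rw [map_sub]
    rfl
  have hex : ∀ n : ℕ, ∃ m : X, F.mkQ m = F.mkQ (y (φ n) - e) ∧
      ‖m‖ < ‖F.mkQ (y (φ n) - e)‖ + 1 / ((n : ℝ) + 1) := fun n =>
    Submodule.Quotient.norm_mk_lt _ Nat.one_div_pos_of_nat
  choose m hm hmlt using hex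
  refine ⟨e, he, fun n => y (φ n) - e - m n, fun n => ?_, φ, hφ, ?_⟩
  · exact (Submodule.Quotient.eq F).1 (hm n).symm
  · refine squeeze_zero_norm (fun n => ?_)
      (by simpa using hlim'.add (tendsto_one_div_add_atTop_nhds_zero_nat (𝕜 := ℝ)))
    have : y (φ n) - (e + (y (φ n) - e - m n)) = m n := by abel
    rw [this]
    simpa using (hmlt n).le

/-- The sum of a finite-dimensional subspace and a simultaneously approximatively compact
closed subspace is simultaneously approximatively compact. -/
theorem findim_add_simApproxCompact_subspace [CompleteSpace X]
    (E F : Subspace ℝ X) [FiniteDimensional ℝ E] (hF : IsClosed (F : Set X))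
    (hFac : SimApproxCompact (F : Set X)) :
    SimApproxCompact ((E : Set X) + (F : Set X)) := by
  intro A hne hA y ⟨hyC, hylim⟩
  obtain ⟨R, hR⟩ : ∃ R, ∀ n, ‖y n‖ ≤ R := by
    obtain ⟨a, ha⟩ := hne
    obtain ⟨S, hS⟩ := hylim.bddAbove_range
    refine ⟨‖a‖ + S, fun n => ?_⟩
    have h1 := norm_sub_le_simSup hA ha (y n)
    have h2 : simSup A (y n) ≤ S := hS ⟨n, rfl⟩
    have h3 := norm_le_norm_add_norm_sub a (y n)
    linarith
  obtain ⟨e, he, g, hg, φ, hφ, hlim⟩ := exists_subseq_asymptotic_translate E F hF hyC hR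
  have hmemC : ∀ f ∈ F, e + f ∈ (E : Set X) + (F : Set X) := fun f hf => Set.add_mem_add he hf
  have hyφ : Tendsto (fun n => simSup A (y (φ n))) atTop
      (𝓝 (simDist A ((E : Set X) + (F : Set X)))) := hylim.comp hφ.tendsto_atTop
  have hsup : Tendsto (fun n => simSup A (e + g n)) atTop
      (𝓝 (simDist A ((E : Set X) + (F : Set X)))) := by
    refine tendsto_of_tendsto_of_tendsto_of_le_of_le tendsto_const_nhds
      (by simpa using hyφ.add hlim.norm) (fun n => simDist_le_simSup A (hmemC _ (hg n)))
      fun n => ?_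
    have h := simSup_le_add hne hA (e + g n) (y (φ n))
    rwa [norm_sub_rev] at h
  have hdist : simDist ((fun a => a - e) '' A) (F : Set X) =
      simDist A ((E : Set X) + (F : Set X)) := by
    apply le_antisymm
    · refine ge_of_tendsto' hsup fun n => ?_
      rw [← simSup_image_sub]
      exact simDist_le_simSup _ (hg n)
    · have : Nonempty (F : Set X) := ⟨⟨0, F.zero_mem⟩⟩
      refine le_ciInf fun f => ?_
      rw [simSup_image_sub]
      exact simDist_le_simSup A (hmemC _ f.2)
  have hA' : Bornology.IsBounded ((fun a => a - e) '' A) := by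
    simpa only [sub_eq_add_neg, id] using
      (LipschitzWith.id.add (LipschitzWith.const (-e))).isBounded_image hA
  obtain ⟨c, hc, ψ, hψ, hψlim⟩ := hFac _ (hne.image _) hA' g
    ⟨hg, by simpa only [simSup_image_sub, hdist] using hsup⟩
  refine ⟨e + c, hmemC c hc, φ ∘ ψ, hφ.comp hψ, ?_⟩
  have h := (hlim.comp hψ.tendsto_atTop).add (hψlim.const_add e)
  rw [zero_add] at h
  refine h.congr fun n => ?_
  simp
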